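/- Let R be a regular domain with a generalized regular system of parameters x = x_1,…,x_p, and let I ⊆ R be an ideal. The following are equivalent: (1) the integral closure I̅ is a monomial ideal in x; (2) I_0 ⊆ I̅; (3) I̅ = {f ∈ R : Γ_x(f) ⊆ Γ_x(I)}; (4) Γ_x(I) = Γ_x(K_I), where K_I is the ideal generated by the monomials of R that lie in I̅. -/

import Mathlib

open Ideal Set Pointwise

noncomputable section

namespace NND

variable {R : Type*} [CommRing R] {p : ℕ}

/-- The monomial `x^a = x 0 ^ a 0 * ⋯` in the elements `x`. -/
def mono (x : Fin p → R) (a : Fin p → ℕ) : R := ∏ i, x i ^ a i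

/-- A (commutative) ring is regular local if it is Noetherian local and its maximal ideal
can be generated by `dim R` elements. -/
def IsRegularLocal (A : Type*) [CommRing A] : Prop :=
  IsNoetherianRing A ∧ ∃ h : IsLocalRing A, ∃ s : Finset A,
    Ideal.span (s : Set A) = @IsLocalRing.maximalIdeal A _ h ∧
    (s.card : WithBot (WithTop ℕ)) = ringKrullDim A

/-- A regular domain: an integral domain whose localization at every prime is regular local. -/
def IsRegularDomain (A : Type*) [CommRing A] : Prop :=
  IsDomain A ∧ ∀ (P : Ideal A) (hP : P.IsPrime), IsRegularLocal (@Localization.AtPrime A _ P hP)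

/-- `x` is a regular sequence. -/
def IsRegSeq (x : Fin p → R) : Prop :=
  Ideal.span (Set.range x) ≠ ⊤ ∧
  ∀ i : Fin p, ∀ r : R, r * x i ∈ Ideal.span (x '' {j | j < i}) →
    r ∈ Ideal.span (x '' {j | j < i})

/-- A generalized regular system of parameters: a permutable regular sequence all of whose
subquotients are regular domains. -/
def IsGRSOP (x : Fin p → R) : Prop :=
  (∀ σ : Equiv.Perm (Fin p), IsRegSeq (x ∘ σ)) ∧
  ∀ S : Set (Fin p), IsRegularDomain (R ⧸ Ideal.span (x '' S))

/-- `A` is the exponent set of a monomial representation of `f`: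
`h * f = ∑_{a ∈ A} r a * x^a` with `h` and the `r a` outside `(x_1, …, x_p)`. -/
def IsMonRep (x : Fin p → R) (f : R) (A : Finset (Fin p → ℕ)) : Prop :=
  ∃ (h : R) (r : (Fin p → ℕ) → R),
    h ∉ Ideal.span (Set.range x) ∧ (∀ a ∈ A, r a ∉ Ideal.span (Set.range x)) ∧
    h * f = ∑ a ∈ A, r a * mono x a

/-- A minimal (irredundant) monomial representation: no monomial divides another. -/
def IsMinMonRep (x : Fin p → R) (f : R) (A : Finset (Fin p → ℕ)) : Prop :=
  IsMonRep x f A ∧ ∀ a ∈ A, ∀ b ∈ A, a ≠ b → ¬ mono x a ∣ mono x b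

open Classical in
/-- The support of `f`: the exponent set of its (unique) minimal monomial representation. -/
def supp (x : Fin p → R) (f : R) : Set (Fin p → ℕ) :=
  if h : ∃ A : Finset (Fin p → ℕ), IsMinMonRep x f A then ↑h.choose else ∅

/-- Embedding of exponent vectors into `ℝ^p`. -/
def toR (a : Fin p → ℕ) : Fin p → ℝ := fun i => (a i : ℝ)

/-- The Newton polyhedron of a set of ring elements. -/
def Γ (x : Fin p → R) (S : Set R) : Set (Fin p → ℝ) :=
  convexHull ℝ (toR '' ⋃ f ∈ S, supp x f)

/-- The Newton polyhedron `Γ_x(I)` of an ideal. -/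
def ΓI (x : Fin p → R) (I : Ideal R) : Set (Fin p → ℝ) := Γ x (I : Set R)

/-- The Newton polyhedron `Γ_x(f)` of an element: that of the principal ideal `(f)`. -/
def ΓE (x : Fin p → R) (f : R) : Set (Fin p → ℝ) := ΓI x (Ideal.span {f})

/-- The integral closure of an ideal `I`: elements satisfying an equation of integral
dependence `f^n + a_1 f^{n-1} + ⋯ + a_n = 0` with `a_i ∈ I^i`. -/
def intClosure (I : Ideal R) : Set R :=
  {f | ∃ n : ℕ, 0 < n ∧ ∃ a : ℕ → R, (∀ i ∈ Finset.Icc 1 n, a i ∈ I ^ i) ∧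
    f ^ n + ∑ i ∈ Finset.Icc 1 n, a i * f ^ (n - i) = 0}

/-- The monomial ideal `I_0` spanned by the lattice points of `Γ_x(I)`. -/
def idealZero (x : Fin p → R) (I : Ideal R) : Ideal R :=
  Ideal.span (mono x '' {a | toR a ∈ ΓI x I})

/-- The ideal `K_I` generated by the monomials lying in the integral closure of `I`. -/
def KIdeal (x : Fin p → R) (I : Ideal R) : Ideal R :=
  Ideal.span {m | (∃ a : Fin p → ℕ, m = mono x a) ∧ m ∈ intClosure I}

/-!
For an upper set `U` of exponents, an element `f` lies in the ideal generated by the `x^a`, `a ∈ U`,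
if and only if `supp f ⊆ U`; in particular `I_0` consists of the `f` with `Γ_x(f) ⊆ Γ_x(I)`. This
reduces to two properties of monomial ideals: their minimal exponents have coefficients determined
modulo the prime `(x)`, and multiplication by an element outside `(x)` is injective modulo them.

The integral closure is always contained in `I_0`. Otherwise some `f` integral over `I` has an
exponent `a` off the Newton polyhedron. A linear form separating `a` from `Γ_x(I)`, refined to a
total order, orders the monomials so that the leading exponent of `f` precedes all exponents of `I`,
and then the leading term of `f^n` cannot cancel in an equation of integral dependence.

Conversely a lattice point of the convex hull of exponents `u` with `x^u` integral over `I` is a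
rational convex combination of them, so a power of `x^a` is a product of such `x^u`. Hence `I_0` is
contained in the integral closure once `Γ_x(I)` is spanned by monomials integral over `I`.
-/

section Ideals

variable {A : Type*} [CommRing A]

lemma mem_of_mul_mem_sup_span_mul {K L : Ideal A} {y f : A} (hKL : K ≤ L)
    (hy : IsSMulRegular (A ⧸ K) y) (hf : y * f ∈ K ⊔ span {y} * L) : f ∈ L := by
  obtain ⟨k, hk, z, hz, hsum⟩ := Submodule.mem_sup.1 hf
  obtain ⟨l, hl, rfl⟩ := mem_span_singleton_mul.1 hz
  have hmul : y • (f - l) ∈ K := by rwa [smul_eq_mul, mul_sub, ← hsum, add_sub_cancel_right]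
  exact (sub_add_cancel f l) ▸
    L.add_mem (hKL (mem_of_isSMulRegular_quotient_of_smul_mem hy hmul)) hl

/-- The inductive step for regularity modulo monomial ideals: every monomial ideal is built from
monomial ideals in fewer variables by passing from `K ≤ L` to `K + yL`. -/
lemma isSMulRegular_quotient_sup_span_mul {K L : Ideal A} {y h : A} (hKL : K ≤ L)
    (hy : IsSMulRegular (A ⧸ K) y) (hK : IsSMulRegular (A ⧸ K ⊔ span {y}) h)
    (hL : IsSMulRegular (A ⧸ L) h) : IsSMulRegular (A ⧸ K ⊔ span {y} * L) h := by
  refine (isSMulRegular_quotient_iff_mem_of_smul_mem _ _).2 fun f hf => ?_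
  have hfK : f ∈ K ⊔ span {y} :=
    mem_of_isSMulRegular_quotient_of_smul_mem hK (sup_le_sup_left Ideal.mul_le_left K hf)
  obtain ⟨k, hk, z, hz, rfl⟩ := Submodule.mem_sup.1 hfK
  obtain ⟨g, rfl⟩ := mem_span_singleton'.1 hz
  have hmul : y * (h * g) ∈ K ⊔ span {y} * L := by
    have hsub := sub_mem hf (mem_sup_left (K.mul_mem_left h hk) : h * k ∈ K ⊔ span {y} * L)
    convert hsub using 1
    rw [smul_eq_mul]; ring
  have hg : g ∈ L := mem_of_isSMulRegular_quotient_of_smul_mem hL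
    (mem_of_mul_mem_sup_span_mul hKL hy hmul)
  exact add_mem (mem_sup_left hk) (mem_sup_right (mul_comm g y ▸ mul_mem_mul
    (mem_span_singleton_self y) hg))

lemma exists_notMem_mul_mem_of_forall_mem_sup_pow {P : Ideal A} [P.IsPrime]
    [IsNoetherianRing (Localization.AtPrime P)] {K : Ideal A} {f : A}
    (hf : ∀ n, f ∈ K ⊔ P ^ n) : ∃ h ∉ P, h * f ∈ K := by
  set φ := algebraMap A (Localization.AtPrime P)
  set m := IsLocalRing.maximalIdeal (Localization.AtPrime P)
  have hφf : Submodule.Quotient.mk (φ f) ∈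
      (⨅ n : ℕ, m ^ n • ⊤ : Submodule (Localization.AtPrime P) (_ ⧸ K.map φ)) := by
    refine (Submodule.mem_iInf _).2 fun n => ?_
    obtain ⟨k, hk, q, hq, rfl⟩ := Submodule.mem_sup.1 (hf n)
    have hφq : φ q ∈ m ^ n := by
      rw [show m = P.map φ from Localization.AtPrime.map_eq_maximalIdeal.symm, ← Ideal.map_pow]
      exact mem_map_of_mem φ hq
    have hmk : (Submodule.Quotient.mk (φ (k + q)) : _ ⧸ K.map φ) =
        φ q • Submodule.Quotient.mk 1 := by
      rw [← Submodule.Quotient.mk_smul, Submodule.Quotient.eq, map_add, smul_eq_mul, mul_one,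
        add_sub_cancel_right]
      exact mem_map_of_mem φ hk
    exact hmk ▸ Submodule.smul_mem_smul hφq trivial
  rw [Ideal.iInf_pow_smul_eq_bot_of_isLocalRing _ (IsLocalRing.maximalIdeal.isMaximal _).ne_top,
    Submodule.mem_bot, Submodule.Quotient.mk_eq_zero] at hφf
  obtain ⟨h, hh, hmem⟩ :=
    (IsLocalization.algebraMap_mem_map_algebraMap_iff P.primeCompl _ K f).1 hφf
  exact ⟨h, hh, hmem⟩

end Ideals

section Monomials

lemma mono_zero (x : Fin p → R) : mono x 0 = 1 := by simp [mono]

lemma mono_add (x : Fin p → R) (a b : Fin p → ℕ) : mono x (a + b) = mono x a * mono x b := by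
  simp [mono, pow_add, Finset.prod_mul_distrib]

lemma mono_single (x : Fin p → R) (i : Fin p) : mono x (Pi.single i 1) = x i := by
  rw [mono, Finset.prod_eq_single i (fun j _ hj => by simp [hj]) (by simp), Pi.single_eq_same,
    pow_one]

lemma mono_sum_nsmul (x : Fin p → R) {ι : Type*} (s : Finset ι) (n : ι → ℕ)
    (a : ι → Fin p → ℕ) : mono x (∑ k ∈ s, n k • a k) = ∏ k ∈ s, mono x (a k) ^ n k := by
  simp_rw [mono, Finset.sum_apply, Pi.smul_apply, smul_eq_mul, ← Finset.prod_pow_eq_pow_sum,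
    ← Finset.prod_pow, mul_comm (n _), pow_mul]
  exact Finset.prod_comm

lemma mono_nsmul (x : Fin p → R) (n : ℕ) (a : Fin p → ℕ) : mono x (n • a) = mono x a ^ n := by
  simpa using mono_sum_nsmul x {()} (fun _ => n) fun _ => a

lemma single_one_le {a : Fin p → ℕ} {i : Fin p} (hi : a i ≠ 0) : Pi.single i 1 ≤ a := by
  rw [Pi.single, update_le_iff]
  exact ⟨Nat.one_le_iff_ne_zero.2 hi, fun _ _ => Nat.zero_le _⟩

lemma sub_single_one_lt {a : Fin p → ℕ} {i : Fin p} (hi : a i ≠ 0) : a - Pi.single i 1 < a :=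
  tsub_le_self.lt_of_ne fun heq => hi <| by
    have := congrFun heq i
    rw [Pi.sub_apply, Pi.single_eq_same] at this
    omega

lemma exists_minimal_le {U : Set (Fin p → ℕ)} {a : Fin p → ℕ} (ha : a ∈ U) :
    ∃ b ≤ a, Minimal (· ∈ U) b :=
  exists_minimal_le_of_wellFoundedLT (· ∈ U) a ha

lemma finite_minimal (U : Set (Fin p → ℕ)) : {b | Minimal (· ∈ U) b}.Finite :=
  WellQuasiOrderedLE.finite_of_isAntichain (setOfPred_minimal_antichain _)

/-- The ideal spanned by the monomials with exponent in `U`. Monomial ideals are usually presented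
with `U` an upper set. -/
def monIdeal (x : Fin p → R) (U : Set (Fin p → ℕ)) : Ideal R := span (mono x '' U)

variable {x : Fin p → R} {U V : Set (Fin p → ℕ)}

lemma mono_mem_monIdeal {a : Fin p → ℕ} (ha : a ∈ U) : mono x a ∈ monIdeal x U :=
  subset_span (mem_image_of_mem _ ha)

@[gcongr]
lemma monIdeal_mono (h : U ⊆ V) : monIdeal x U ≤ monIdeal x V := span_mono (image_mono h)

lemma monIdeal_union : monIdeal x (U ∪ V) = monIdeal x U ⊔ monIdeal x V := by
  rw [monIdeal, image_union, span_union]; rfl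

lemma monIdeal_add : monIdeal x (U + V) = monIdeal x U * monIdeal x V := by
  rw [monIdeal, monIdeal, monIdeal, span_mul_span', ← image2_add, ← image2_mul,
    image_image2_distrib (mono_add x)]

lemma monIdeal_singleton (a : Fin p → ℕ) : monIdeal x {a} = span {mono x a} := by
  rw [monIdeal, image_singleton]

lemma monIdeal_eq_top_of_zero_mem (h : 0 ∈ U) : monIdeal x U = ⊤ :=
  (eq_top_iff_one _).2 (mono_zero x ▸ mono_mem_monIdeal h)

lemma monIdeal_minimal (U : Set (Fin p → ℕ)) :
    monIdeal x {b | Minimal (· ∈ U) b} = monIdeal x U := by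
  refine le_antisymm (monIdeal_mono fun b hb => hb.prop) (span_le.2 ?_)
  rintro _ ⟨a, ha, rfl⟩
  obtain ⟨b, hba, hb⟩ := exists_minimal_le ha
  rw [← tsub_add_cancel_of_le hba, mono_add]
  exact mul_mem_left _ _ (mono_mem_monIdeal hb)

lemma mono_mem_span_range {a : Fin p → ℕ} (ha : a ≠ 0) : mono x a ∈ span (range x) := by
  obtain ⟨i, hi⟩ := Function.ne_iff.1 ha
  exact mem_of_dvd _ ((dvd_pow_self (x i) hi).trans
    (Finset.dvd_prod_of_mem _ (Finset.mem_univ i))) (subset_span (mem_range_self i))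

lemma monIdeal_compl_zero : monIdeal x {0}ᶜ = span (range x) := by
  refine le_antisymm (span_le.2 ?_) (span_le.2 ?_)
  · rintro _ ⟨a, ha, rfl⟩
    exact mono_mem_span_range ha
  · rintro _ ⟨i, rfl⟩
    exact mono_single x i ▸ mono_mem_monIdeal (Pi.single_ne_zero_iff.2 one_ne_zero)

lemma mul_mono_mem_monIdeal_Ioi {r : R} (hr : r ∈ span (range x)) (a : Fin p → ℕ) :
    r * mono x a ∈ monIdeal x (Ioi a) := by
  rw [← monIdeal_compl_zero] at hr
  have hmul := Ideal.mul_mem_mul hr (mono_mem_monIdeal (x := x) (mem_singleton a))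
  rw [← monIdeal_add] at hmul
  refine monIdeal_mono ?_ hmul
  rintro _ ⟨b, hb, _, rfl, rfl⟩
  exact lt_add_of_pos_left _ (pos_iff_ne_zero.2 hb)

lemma monIdeal_setOf_le_sum_le (n : ℕ) :
    monIdeal x {a | n ≤ ∑ i, a i} ≤ span (range x) ^ n := by
  refine span_le.2 ?_
  rintro _ ⟨a, ha, rfl⟩
  refine Ideal.pow_le_pow_right ha ?_
  rw [mono, ← Finset.prod_pow_eq_pow_sum]
  exact prod_mem_prod fun i _ => pow_mem_pow (subset_span (mem_range_self i)) _

/-- The exponents of the colon ideal `monIdeal x U : x ^ b`, for `U` an upper set. -/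
def shift (U : Set (Fin p → ℕ)) (b : Fin p → ℕ) : Set (Fin p → ℕ) := {a | a + b ∈ U}

lemma isUpperSet_shift (hU : IsUpperSet U) (b : Fin p → ℕ) : IsUpperSet (shift U b) :=
  fun _ _ hac => hU (by gcongr)

/-- For `U` an upper set, the exponents of the ideal generated by the monomials of `monIdeal x U`
that do not involve `x i`. -/
def slice (U : Set (Fin p → ℕ)) (i : Fin p) : Set (Fin p → ℕ) := {a | Function.update a i 0 ∈ U}

lemma isUpperSet_slice (hU : IsUpperSet U) (i : Fin p) : IsUpperSet (slice U i) :=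
  fun _ _ hac => hU (update_le_update_iff.2 ⟨le_rfl, fun j _ => hac j⟩)

lemma slice_subset_shift (hU : IsUpperSet U) (i : Fin p) (b : Fin p → ℕ) :
    slice U i ⊆ shift U b := fun _ ha =>
  hU ((update_le_self_iff.2 zero_le).trans le_self_add) ha

lemma slice_union_single_add_shift (hU : IsUpperSet U) (i : Fin p) :
    slice U i ∪ ({Pi.single i 1} + shift U (Pi.single i 1)) = U := by
  ext a
  refine ⟨?_, fun ha => ?_⟩
  · rintro (ha | ha)
    · exact hU (update_le_self_iff.2 zero_le) ha
    · obtain ⟨c, hc, rfl : Pi.single i 1 + c = a⟩ := singleton_add.subset ha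
      exact add_comm c _ ▸ hc
  · by_cases hai : a i = 0
    · exact .inl (by rwa [slice, mem_ofPred_eq, ← hai, Function.update_eq_self])
    · have hle : Pi.single i 1 ≤ a := single_one_le hai
      refine .inr (singleton_add.superset ⟨a - Pi.single i 1, ?_, ?_⟩)
      · rwa [shift, mem_ofPred_eq, tsub_add_cancel_of_le hle]
      · exact add_tsub_cancel_of_le hle

lemma monIdeal_eq_slice_sup_mul_shift (hU : IsUpperSet U) (i : Fin p) :
    monIdeal x U = monIdeal x (slice U i) ⊔ span {x i} * monIdeal x (shift U (Pi.single i 1)) := by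
  conv_lhs => rw [← slice_union_single_add_shift hU i]
  rw [monIdeal_union, monIdeal_add, monIdeal_singleton, mono_single]

end Monomials

section Regularity

variable {x : Fin p → R} {U : Set (Fin p → ℕ)}

lemma exists_forall_inf_mem (hU : IsUpperSet U) : ∃ n : Fin p → ℕ, ∀ a ∈ U, a ⊓ n ∈ U := by
  refine ⟨(finite_minimal U).toFinset.sup id, fun a ha => ?_⟩
  obtain ⟨b, hba, hb⟩ := exists_minimal_le ha
  exact hU (le_inf hba (Finset.le_sup (f := id) ((finite_minimal U).mem_toFinset.2 hb))) hb.prop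

lemma inf_update_mem_slice (hU : IsUpperSet U) {n : Fin p → ℕ} (hn : ∀ a ∈ U, a ⊓ n ∈ U)
    (i : Fin p) {a : Fin p → ℕ} (ha : a ∈ slice U i) : a ⊓ Function.update n i 0 ∈ slice U i := by
  refine hU (fun j => ?_) (hn _ ha)
  obtain rfl | hj := eq_or_ne j i <;> simp [*]

lemma inf_sub_single_mem_shift {n : Fin p → ℕ} (hn : ∀ a ∈ U, a ⊓ n ∈ U) {i : Fin p}
    (hi : n i ≠ 0) {a : Fin p → ℕ} (ha : a ∈ shift U (Pi.single i 1)) :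
    a ⊓ (n - Pi.single i 1) ∈ shift U (Pi.single i 1) := by
  have heq : a ⊓ (n - Pi.single i 1) + Pi.single i 1 = (a + Pi.single i 1) ⊓ n := by
    ext j
    have hle : (Pi.single i 1 : Fin p → ℕ) j ≤ n j := single_one_le hi j
    simp only [Pi.add_apply, Pi.inf_apply, Pi.sub_apply]
    omega
  rw [shift, mem_ofPred_eq, heq]
  exact hn _ ha

lemma isSMulRegular_quotient_monIdeal_sup_of_slice_of_shift {h : R} {S : Set (Fin p)} {i : Fin p}
    (hU : IsUpperSet U)
    (hi : IsSMulRegular (R ⧸ monIdeal x (slice U i) ⊔ span (x '' S)) (x i))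
    (hslice : IsSMulRegular (R ⧸ monIdeal x (slice U i) ⊔ span (x '' insert i S)) h)
    (hshift : IsSMulRegular (R ⧸ monIdeal x (shift U (Pi.single i 1)) ⊔ span (x '' S)) h) :
    IsSMulRegular (R ⧸ monIdeal x U ⊔ span (x '' S)) h := by
  rw [image_insert_eq, span_insert, sup_comm (span {x i}), ← sup_assoc] at hslice
  have hsum : monIdeal x U ⊔ span (x '' S) = (monIdeal x (slice U i) ⊔ span (x '' S)) ⊔
      span {x i} * (monIdeal x (shift U (Pi.single i 1)) ⊔ span (x '' S)) := by
    rw [Ideal.mul_sup, sup_sup_sup_comm, ← monIdeal_eq_slice_sup_mul_shift hU,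
      sup_eq_left.2 (Ideal.mul_le_right (I := span {x i}) (J := span (x '' S)))]
  rw [hsum]
  exact isSMulRegular_quotient_sup_span_mul
    (sup_le_sup_right (monIdeal_mono (slice_subset_shift hU i _)) _) hi hslice hshift

/-- Every subset of `x`, in any order, is a regular sequence. -/
def IsPermutablyRegular (x : Fin p → R) : Prop :=
  ∀ i (S : Set (Fin p)), i ∉ S → IsSMulRegular (R ⧸ span (x '' S)) (x i)

/-- The bound `n` on the exponents of the generators is only there to drive the induction; the
variables in `S`, set to zero, are those already eliminated. -/
lemma isSMulRegular_quotient_monIdeal_sup (hx : IsPermutablyRegular x) (n : Fin p → ℕ) :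
    ∀ {h : R} {S : Set (Fin p)} {U : Set (Fin p → ℕ)}, IsUpperSet U → (∀ a ∈ U, a ⊓ n ∈ U) →
      Disjoint S n.support →
      (∀ T ⊆ S ∪ n.support, IsSMulRegular (R ⧸ span (x '' T)) h) →
      IsSMulRegular (R ⧸ monIdeal x U ⊔ span (x '' S)) h := by
  induction n using WellFoundedLT.induction with
  | _ n ih =>
    intro h S U hU hn hS hh
    obtain rfl | hn0 := eq_or_ne n 0
    · obtain rfl | ⟨a, ha⟩ := U.eq_empty_or_nonempty
      · rw [monIdeal, image_empty, span_empty, bot_sup_eq]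
        exact hh S subset_union_left
      · rw [monIdeal_eq_top_of_zero_mem (by simpa using hn a ha), top_sup_eq,
          isSMulRegular_quotient_iff_mem_of_smul_mem]
        exact fun _ _ => trivial
    obtain ⟨i, hi⟩ := Function.ne_iff.1 hn0
    have hiS : i ∉ S := hS.notMem_of_mem_right hi
    have hlt : Function.update n i 0 < n := update_lt_self_iff.2 (Nat.pos_of_ne_zero hi)
    have hsupp : (Function.update n i 0).support = n.support \ {i} :=
      Function.support_update_zero n i
    have hsupp' : (n - Pi.single i 1).support ⊆ n.support :=
      Function.support_subset_iff'.2 fun j hj => by simp_all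
    have hU₀ := isUpperSet_slice hU i
    have hn₀ := fun a (ha : a ∈ slice U i) => inf_update_mem_slice hU hn i ha
    refine isSMulRegular_quotient_monIdeal_sup_of_slice_of_shift (i := i) hU ?_ ?_ ?_
    · exact ih _ hlt hU₀ hn₀ (hsupp ▸ hS.mono_right sdiff_subset) fun T hT => hx i T fun hiT => by
        simpa [hiS] using hT hiT
    · refine ih _ hlt hU₀ hn₀ ?_ fun T hT => hh T (hT.trans ?_)
      · exact hsupp ▸ disjoint_insert_left.2 ⟨fun h => h.2 rfl, hS.mono_right sdiff_subset⟩
      · exact hsupp ▸ union_subset (insert_subset (.inr hi) subset_union_left)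
          (sdiff_subset.trans subset_union_right)
    · exact ih _ (sub_single_one_lt hi) (isUpperSet_shift hU _)
        (fun a => inf_sub_single_mem_shift hn hi) (hS.mono_right hsupp')
        fun T hT => hh T (hT.trans (union_subset_union_right S hsupp'))

lemma IsPermutablyRegular.isSMulRegular_quotient_monIdeal (hx : IsPermutablyRegular x)
    (hU : IsUpperSet U) {h : R} (hh : ∀ T, IsSMulRegular (R ⧸ span (x '' T)) h) :
    IsSMulRegular (R ⧸ monIdeal x U) h := by
  obtain ⟨n, hn⟩ := exists_forall_inf_mem hU
  have := isSMulRegular_quotient_monIdeal_sup hx n hU hn (empty_disjoint _) fun T _ => hh T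
  rwa [image_empty, span_empty, sup_bot_eq] at this

lemma IsPermutablyRegular.mem_monIdeal_shift_single (hx : IsPermutablyRegular x)
    (hU : IsUpperSet U) {f : R} {i : Fin p} (hf : x i * f ∈ monIdeal x U) :
    f ∈ monIdeal x (shift U (Pi.single i 1)) := by
  obtain ⟨n, hn⟩ := exists_forall_inf_mem hU
  have hreg := isSMulRegular_quotient_monIdeal_sup hx (Function.update n i 0)
    (isUpperSet_slice hU i) (fun a => inf_update_mem_slice hU hn i) (empty_disjoint _)
    fun T hT => hx i T fun hiT => by simpa using hT hiT
  rw [image_empty, span_empty, sup_bot_eq] at hreg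
  rw [monIdeal_eq_slice_sup_mul_shift hU i] at hf
  exact mem_of_mul_mem_sup_span_mul (monIdeal_mono (slice_subset_shift hU i _)) hreg hf

end Regularity

section PrimeSystem

/-- What the theory of Newton polyhedra uses of a generalized regular system of parameters: every
subset of `x` generates a prime ideal, no `x i` is redundant, and Krull's intersection theorem holds
at the prime generated by all of `x`. -/
structure IsPrimeSystem (x : Fin p → R) : Prop where
  isPrime_span : ∀ S : Set (Fin p), (span (x '' S)).IsPrime
  notMem_span_compl : ∀ i, x i ∉ span (x '' {i}ᶜ)
  isNoetherianRing_localization : ∀ [(span (range x)).IsPrime],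
    IsNoetherianRing (Localization.AtPrime (span (range x)))

variable {x : Fin p → R} {U : Set (Fin p → ℕ)}

lemma IsRegSeq.last_notMem_span {q : ℕ} {x : Fin (q + 1) → R} (hx : IsRegSeq x) :
    x (Fin.last q) ∉ span (x '' {Fin.last q}ᶜ) := by
  have hset : {j | j < Fin.last q} = ({Fin.last q}ᶜ : Set (Fin (q + 1))) := by
    ext j; simp [Fin.lt_last_iff_ne_last]
  intro hmem
  have hone : (1 : R) ∈ span (x '' {Fin.last q}ᶜ) := by
    rw [← hset]
    exact hx.2 _ _ (by rwa [one_mul, hset])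
  exact hx.1 ((eq_top_iff_one _).2 (span_mono (image_subset_range _ _) hone))

lemma IsGRSOP.notMem_span_compl (hx : IsGRSOP x) (i : Fin p) : x i ∉ span (x '' {i}ᶜ) := by
  obtain ⟨q, rfl⟩ := Nat.exists_eq_succ_of_ne_zero i.pos.ne'
  have hlast := (hx.1 (Equiv.swap i (Fin.last q))).last_notMem_span
  rwa [image_comp, image_compl_eq (Equiv.bijective _), image_singleton, Function.comp_apply,
    Equiv.swap_apply_right] at hlast

lemma IsGRSOP.isPrimeSystem (hR : IsRegularDomain R) (hx : IsGRSOP x) : IsPrimeSystem x where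
  isPrime_span S := (Ideal.Quotient.isDomain_iff_prime _).1 (hx.2 S).1
  notMem_span_compl := hx.notMem_span_compl
  isNoetherianRing_localization := (hR.2 _ _).1

namespace IsPrimeSystem

variable (hx : IsPrimeSystem x)
include hx

lemma isPrime_span_range : (span (range x)).IsPrime := image_univ (f := x) ▸ hx.isPrime_span univ

lemma isSMulRegular_quotient_span {h : R} {S : Set (Fin p)} (hh : h ∉ span (x '' S)) :
    IsSMulRegular (R ⧸ span (x '' S)) h :=
  (isSMulRegular_quotient_iff_mem_of_smul_mem _ _).2 fun _ hf =>
    ((hx.isPrime_span S).mem_or_mem hf).resolve_left hh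

lemma isPermutablyRegular : IsPermutablyRegular x := fun i _ hi =>
  hx.isSMulRegular_quotient_span fun hmem =>
    hx.notMem_span_compl i (span_mono (image_mono (subset_compl_singleton_iff.2 hi)) hmem)

lemma mem_monIdeal_of_mul_mem (hU : IsUpperSet U) {h f : R} (hh : h ∉ span (range x))
    (hf : h * f ∈ monIdeal x U) : f ∈ monIdeal x U :=
  mem_of_isSMulRegular_quotient_of_smul_mem (hx.isPermutablyRegular.isSMulRegular_quotient_monIdeal
    hU fun _ => hx.isSMulRegular_quotient_span fun hmem =>
      hh (span_mono (image_subset_range _ _) hmem)) hf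

lemma mem_monIdeal_shift (b : Fin p → ℕ) {f : R} (hU : IsUpperSet U)
    (hf : mono x b * f ∈ monIdeal x U) : f ∈ monIdeal x (shift U b) := by
  induction b using WellFoundedLT.induction generalizing U with
  | _ b ih =>
    obtain rfl | hb := eq_or_ne b 0
    · simpa [shift, mono_zero] using hf
    obtain ⟨i, hi⟩ := Function.ne_iff.1 hb
    have hb : b - Pi.single i 1 + Pi.single i 1 = b := tsub_add_cancel_of_le (single_one_le hi)
    rw [← hb, mono_add, mul_comm (mono x _), mul_assoc, mono_single] at hf
    have hf' := ih _ (sub_single_one_lt hi) (isUpperSet_shift hU _)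
      (hx.isPermutablyRegular.mem_monIdeal_shift_single hU hf)
    simpa only [shift, mem_ofPred_eq, add_assoc, hb] using hf'

lemma mem_span_range_of_mul_mono_mem (hU : IsUpperSet U) {r : R} {b : Fin p → ℕ} (hb : b ∉ U)
    (hr : r * mono x b ∈ monIdeal x U) : r ∈ span (range x) := by
  refine monIdeal_compl_zero (x := x) ▸ monIdeal_mono ?_
    (hx.mem_monIdeal_shift b hU (mul_comm r _ ▸ hr))
  exact subset_compl_singleton_iff.2 fun h0 => hb (zero_add b ▸ h0)

lemma mono_mem_monIdeal_iff (hU : IsUpperSet U) {a : Fin p → ℕ} :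
    mono x a ∈ monIdeal x U ↔ a ∈ U := by
  refine ⟨fun ha => by_contra fun haU => hx.isPrime_span_range.one_notMem ?_, mono_mem_monIdeal⟩
  exact hx.mem_span_range_of_mul_mono_mem hU haU (by rwa [one_mul])

lemma mono_dvd_mono_iff {a b : Fin p → ℕ} : mono x a ∣ mono x b ↔ a ≤ b := by
  refine ⟨fun hab => ?_, fun hab => ?_⟩
  · exact (hx.mono_mem_monIdeal_iff (isUpperSet_Ici a)).1
      (mem_of_dvd _ hab (mono_mem_monIdeal self_mem_Ici))
  · exact ⟨mono x (b - a), by rw [← mono_add, add_tsub_cancel_of_le hab]⟩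

lemma mem_monIdeal_of_forall_mem_sup_pow (hU : IsUpperSet U) {f : R}
    (hf : ∀ n, f ∈ monIdeal x U ⊔ span (range x) ^ n) : f ∈ monIdeal x U := by
  have := hx.isPrime_span_range
  have := hx.isNoetherianRing_localization
  obtain ⟨h, hh, hhf⟩ := exists_notMem_mul_mem_of_forall_mem_sup_pow hf
  exact hx.mem_monIdeal_of_mul_mem hU hh hhf

end IsPrimeSystem

end PrimeSystem

section Support

variable {x : Fin p → R} {U : Set (Fin p → ℕ)}

lemma finite_setOf_sum_lt (n : ℕ) : {a : Fin p → ℕ | ∑ i, a i < n}.Finite :=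
  (finite_Iic fun _ => n).subset fun a ha i =>
    (Finset.single_le_sum (fun j _ => Nat.zero_le (a j)) (Finset.mem_univ i)).trans ha.le

lemma exists_inter_subset_sInter {α : Type*} {c : Set (Set α)} (hc : IsChain (· ⊆ ·) c)
    (hne : c.Nonempty) {F : Set α} (hF : F.Finite) : ∃ s ∈ c, s ∩ F ⊆ ⋂₀ c := by
  have hdir : DirectedOn (fun s t : Set α => sᶜ ⊆ tᶜ) c := fun s hs t ht =>
    (hc.total hs ht).elim (fun h => ⟨s, hs, le_rfl, compl_subset_compl.2 h⟩)
      fun h => ⟨t, ht, compl_subset_compl.2 h, le_rfl⟩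
  obtain ⟨s, hs, hFs⟩ := hdir.exists_mem_subset_of_finset_subset_biUnion hne
    (s := (hF.subset sdiff_subset : (F \ ⋂₀ c).Finite).toFinset)
    (by rw [Finite.coe_toFinset]; exact fun a ha => by simpa using ha.2)
  rw [Finite.coe_toFinset] at hFs
  exact ⟨s, hs, fun a ha => by_contra fun hac => hFs ⟨ha.2, hac⟩ ha.1⟩

lemma IsMonRep.mem_monIdeal (hx : IsPrimeSystem x) {f : R} {A : Finset (Fin p → ℕ)}
    (hA : IsMonRep x f A) (hU : IsUpperSet U) (hAU : ↑A ⊆ U) : f ∈ monIdeal x U := by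
  obtain ⟨h, r, hh, -, hf⟩ := hA
  exact hx.mem_monIdeal_of_mul_mem hU hh
    (hf ▸ sum_mem fun a ha => mul_mem_left _ _ (mono_mem_monIdeal (hAU ha)))

lemma IsMinMonRep.isAntichain (hx : IsPrimeSystem x) {f : R} {A : Finset (Fin p → ℕ)}
    (hA : IsMinMonRep x f A) : IsAntichain (· ≤ ·) (A : Set (Fin p → ℕ)) :=
  fun a ha b hb hne hle => hA.2 a ha b hb hne (hx.mono_dvd_mono_iff.2 hle)

lemma IsMinMonRep.mem_monIdeal_iff (hx : IsPrimeSystem x) {f : R} {A : Finset (Fin p → ℕ)}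
    (hA : IsMinMonRep x f A) (hU : IsUpperSet U) : f ∈ monIdeal x U ↔ ↑A ⊆ U := by
  refine ⟨fun hfU a ha => by_contra fun haU => ?_, hA.1.mem_monIdeal hx hU⟩
  obtain ⟨h, r, -, hr, hf⟩ := hA.1
  have hUa : U ⊆ (Iic a)ᶜ := fun b hb hba => haU (hU hba hb)
  have hAa : ∀ b ∈ A.erase a, b ∈ (Iic a)ᶜ := fun b hb hba =>
    hA.isAntichain hx (Finset.mem_of_mem_erase hb) ha (Finset.ne_of_mem_erase hb) hba
  rw [← Finset.add_sum_erase _ _ ha, ← sub_eq_iff_eq_add] at hf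
  refine hr a ha (hx.mem_span_range_of_mul_mono_mem (isLowerSet_Iic a).compl
    (not_not.2 self_mem_Iic) (hf ▸ ?_))
  exact sub_mem (mul_mem_left _ _ (monIdeal_mono hUa hfU))
    (sum_mem fun b hb => mul_mem_left _ _ (mono_mem_monIdeal (hAa b hb)))

namespace IsPrimeSystem

variable (hx : IsPrimeSystem x)
include hx

lemma mem_monIdeal_sInter {c : Set (Set (Fin p → ℕ))} (hc : IsChain (· ⊆ ·) c) (hne : c.Nonempty)
    (hupper : ∀ U ∈ c, IsUpperSet U) {f : R} (hf : ∀ U ∈ c, f ∈ monIdeal x U) :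
    f ∈ monIdeal x (⋂₀ c) := by
  refine hx.mem_monIdeal_of_forall_mem_sup_pow (isUpperSet_sInter hupper) fun n => ?_
  obtain ⟨U, hU, hUc⟩ := exists_inter_subset_sInter hc hne (finite_setOf_sum_lt n)
  have hsub : U ⊆ ⋂₀ c ∪ {a | n ≤ ∑ i, a i} := fun a ha =>
    (lt_or_ge (∑ i, a i) n).imp (fun hlt => hUc ⟨ha, hlt⟩) id
  have hfU := monIdeal_mono hsub (hf U hU)
  rw [monIdeal_union] at hfU
  exact sup_le_sup_left (monIdeal_setOf_le_sum_le n) (monIdeal x (⋂₀ c)) hfU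

lemma exists_minimal_isUpperSet (f : R) :
    ∃ U, Minimal (fun U => IsUpperSet U ∧ f ∈ monIdeal x U) U := by
  obtain ⟨U, -, hU⟩ := zorn_superset_nonempty {U | IsUpperSet U ∧ f ∈ monIdeal x U}
    (fun c hc hchain hne => ⟨⋂₀ c, ⟨isUpperSet_sInter fun U hU => (hc hU).1,
      hx.mem_monIdeal_sInter hchain hne (fun U hU => (hc hU).1) fun U hU => (hc hU).2⟩,
      fun _ => sInter_subset_of_mem⟩) univ
    ⟨isUpperSet_univ, monIdeal_eq_top_of_zero_mem (x := x) (mem_univ 0) ▸ trivial⟩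
  exact ⟨U, hU⟩

/-- The exponents are the minimal elements of the smallest `U` with `f ∈ monIdeal x U`: a
coefficient in `(x_1, …, x_p)` would allow one to shrink `U`. -/
lemma exists_isMinMonRep (f : R) : ∃ A, IsMinMonRep x f A := by
  obtain ⟨U, hmin⟩ := hx.exists_minimal_isUpperSet f
  obtain ⟨hU, hfU⟩ := hmin.prop
  obtain ⟨A, hA⟩ := (finite_minimal U).exists_finset_coe
  have hAmin : ∀ a ∈ A, Minimal (· ∈ U) a := fun a ha => hA.subset ha
  rw [← monIdeal_minimal, ← hA] at hfU
  obtain ⟨r, hr⟩ := (Submodule.mem_span_image_finset_iff_exists_fun' R).1 hfU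
  refine ⟨A, ⟨1, r, hx.isPrime_span_range.one_notMem, fun a ha hra => ?_,
    by simpa using hr.symm⟩, fun a ha b hb hne hdvd => ?_⟩
  · classical
    have hU' : IsUpperSet (U \ {a}) := hU.erase fun b hb hba => (hAmin a ha).eq_of_le hb hba
    have hterms : ∀ b ∈ A, r b * mono x b ∈ monIdeal x (U \ {a}) := fun b hb => by
      obtain rfl | hba := eq_or_ne b a
      · have hsub : Ioi b ⊆ U \ {b} := fun c hc => ⟨hU hc.le (hAmin b hb).prop, hc.ne'⟩
        exact monIdeal_mono hsub (mul_mono_mem_monIdeal_Ioi hra b)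
      · exact mul_mem_left _ _ (mono_mem_monIdeal ⟨(hAmin b hb).prop, hba⟩)
    exact (hmin.le_of_le ⟨hU', hr ▸ sum_mem hterms⟩ sdiff_subset (hAmin a ha).prop).2 rfl
  · exact hne ((hAmin b hb).eq_of_le (hAmin a ha).prop (hx.mono_dvd_mono_iff.1 hdvd))

lemma exists_isMinMonRep_supp (f : R) : ∃ A, IsMinMonRep x f A ∧ supp x f = ↑A :=
  have h := hx.exists_isMinMonRep f
  ⟨h.choose, h.choose_spec, dif_pos h⟩

lemma mem_monIdeal_iff_supp_subset (hU : IsUpperSet U) {f : R} :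
    f ∈ monIdeal x U ↔ supp x f ⊆ U := by
  obtain ⟨A, hA, hsupp⟩ := hx.exists_isMinMonRep_supp f
  rw [hsupp, hA.mem_monIdeal_iff hx hU]

lemma add_mem_supp_mul_mono {f : R} {a : Fin p → ℕ} (ha : a ∈ supp x f) (b : Fin p → ℕ) :
    a + b ∈ supp x (mono x b * f) := by
  obtain ⟨c, hc, hca⟩ := (hx.mem_monIdeal_iff_supp_subset
    (isUpperSet_shift (upperClosure (supp x (mono x b * f))).upper b)).1
    (hx.mem_monIdeal_shift b (upperClosure _).upper ((hx.mem_monIdeal_iff_supp_subset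
      (upperClosure _).upper).2 subset_upperClosure)) ha
  have hmul : mono x b * f ∈ monIdeal x (upperClosure ((b + ·) '' supp x f)) := by
    have hf := (hx.mem_monIdeal_iff_supp_subset (upperClosure _).upper).2
      (subset_upperClosure (s := supp x f))
    have hprod := Ideal.mul_mem_mul (mono_mem_monIdeal (x := x) (mem_singleton b)) hf
    rw [← monIdeal_add] at hprod
    refine monIdeal_mono ?_ hprod
    rintro _ ⟨b, rfl, d, ⟨a', ha', hle⟩, rfl⟩
    exact ⟨b + a', mem_image_of_mem _ ha', by simpa using hle⟩
  obtain ⟨_, ⟨a', ha', rfl⟩, hle⟩ := (hx.mem_monIdeal_iff_supp_subset (upperClosure _).upper).1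
    hmul hc
  have ha'a : a' = a := by
    obtain ⟨A, hA, hsupp⟩ := hx.exists_isMinMonRep_supp f
    refine (hA.isAntichain hx).eq (hsupp ▸ ha') (hsupp ▸ ha) (le_of_add_le_add_left (a := b) ?_)
    exact add_comm a b ▸ hle.trans hca
  subst ha'a
  exact hca.antisymm (add_comm a' b ▸ hle) ▸ hc

end IsPrimeSystem

/-- The exponents occurring in the supports of the elements of `I`. -/
def exponents (x : Fin p → R) (I : Ideal R) : Set (Fin p → ℕ) := ⋃ f ∈ I, supp x f

lemma mem_exponents {I : Ideal R} {a : Fin p → ℕ} : a ∈ exponents x I ↔ ∃ f ∈ I, a ∈ supp x f := by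
  simp only [exponents, mem_iUnion, exists_prop]

namespace IsPrimeSystem

variable (hx : IsPrimeSystem x)
include hx

lemma isUpperSet_exponents (I : Ideal R) : IsUpperSet (exponents x I) := fun a b hab ha => by
  obtain ⟨f, hf, haf⟩ := mem_exponents.1 ha
  rw [← add_tsub_cancel_of_le hab]
  exact mem_exponents.2 ⟨_, I.mul_mem_left _ hf, hx.add_mem_supp_mul_mono haf _⟩

lemma le_monIdeal_iff (hU : IsUpperSet U) {I : Ideal R} :
    I ≤ monIdeal x U ↔ exponents x I ⊆ U := by
  rw [exponents, iUnion₂_subset_iff]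
  exact forall₂_congr fun f _ => hx.mem_monIdeal_iff_supp_subset hU

end IsPrimeSystem

end Support

section IntegralClosure

open Polynomial

/-- The integral closure of `I` as an ideal. An equation of integral dependence of `f` over `I` is
the same as an integral equation of `f T` over the Rees algebra `R[I T] ⊆ R[T]`, which makes the
integral closure of a ring extension available. -/
def idealIntClosure (I : Ideal R) : Ideal R :=
  ((Subalgebra.toSubmodule (integralClosure (reesAlgebra I) R[X])).restrictScalars R).comap
    (monomial 1)

lemma mem_idealIntClosure {I : Ideal R} {f : R} :
    f ∈ idealIntClosure I ↔ IsIntegral (reesAlgebra I) (monomial 1 f : R[X]) :=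
  Iff.rfl

lemma le_idealIntClosure (I : Ideal R) : I ≤ idealIntClosure I := fun f hf =>
  isIntegral_algebraMap (R := reesAlgebra I) (A := R[X])
    (x := ⟨monomial 1 f, reesAlgebra.monomial_mem.2 (by rwa [pow_one])⟩)

lemma mem_idealIntClosure_of_mem_intClosure {I : Ideal R} {f : R} (hf : f ∈ intClosure I) :
    f ∈ idealIntClosure I := by
  obtain ⟨n, hn, a, ha, hfa⟩ := hf
  let c (i : Finset.Icc 1 n) : reesAlgebra I :=
    ⟨monomial i (a i), reesAlgebra.monomial_mem.2 (ha i i.2)⟩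
  have degree_lt : (∑ i, C (c i) * X ^ (n - i : ℕ)).degree < (n : WithBot ℕ) := by
    refine (degree_sum_le _ _).trans_lt ((Finset.sup_lt_iff (WithBot.bot_lt_coe n)).2 ?_)
    refine fun i _ => (degree_C_mul_X_pow_le _ _).trans_lt (WithBot.coe_lt_coe.2 ?_)
    exact Nat.sub_lt hn (Finset.mem_Icc.1 i.2).1
  refine ⟨X ^ n + ∑ i, C (c i) * X ^ (n - i : ℕ), monic_X_pow_add degree_lt, ?_⟩
  have eval_term (i : Finset.Icc 1 n) : eval₂ (algebraMap (reesAlgebra I) R[X]) (monomial 1 f)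
      (C (c i) * X ^ (n - i : ℕ)) = monomial n (a i * f ^ (n - i : ℕ)) := by
    rw [eval₂_mul, eval₂_C, eval₂_X_pow, monomial_pow, one_mul]
    change monomial (i : ℕ) (a i) * _ = _
    rw [monomial_mul_monomial, Nat.add_sub_cancel' (Finset.mem_Icc.1 i.2).2]
  rw [eval₂_add, eval₂_X_pow, eval₂_finsetSum, monomial_pow, one_mul,
    Finset.sum_congr rfl fun i _ => eval_term i, ← map_sum, ← map_add,
    Finset.sum_coe_sort (Finset.Icc 1 n) fun i => a i * f ^ (n - i), hfa, map_zero]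

lemma mem_intClosure_of_mem_idealIntClosure {I : Ideal R} {f : R} (hf : f ∈ idealIntClosure I) :
    f ∈ intClosure I := by
  obtain ⟨P, hP, hPf⟩ := mem_idealIntClosure.1 hf
  set n := P.natDegree
  -- Multiplying `P` by the indeterminate makes the degree of the equation positive.
  have hXP : (X * P).natDegree ≤ n + 1 := by
    simpa [add_comm] using natDegree_mul_le_of_le natDegree_X_le (le_refl n)
  have hXPf : eval₂ (algebraMap (reesAlgebra I) R[X]) (monomial 1 f) (X * P) = 0 := by
    rw [eval₂_mul, hPf, mul_zero]
  let term (i : ℕ) : R := ((X * P).coeff i : R[X]).coeff (n + 1 - i) * f ^ i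
  have coeff_term {i : ℕ} (hi : i ∈ Finset.range (n + 2)) :
      (((X * P).coeff i : R[X]) * monomial i (f ^ i)).coeff (n + 1) = term i := by
    simp only [term]
    rw [← coeff_mul_monomial, Nat.sub_add_cancel (Nat.lt_succ_iff.1 (Finset.mem_range.1 hi))]
  have sum_term : ∑ i ∈ Finset.range (n + 2), term i = 0 := by
    rw [← Finset.sum_congr rfl fun i => coeff_term, ← finsetSum_coeff, ← coeff_zero (n + 1), ← hXPf,
      eval₂_eq_sum_range' _ (Nat.lt_succ_of_le hXP)]
    simp only [monomial_pow, one_mul]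
    rfl
  have term_top : term (n + 1) = f ^ (n + 1) := by
    simp [term, coeff_X_mul, show P.coeff n = 1 from hP]
  refine ⟨n + 1, n.succ_pos,
    fun i => ((X * P).coeff (n + 1 - i) : R[X]).coeff (n + 1 - (n + 1 - i)), fun i hi => ?_, ?_⟩
  · simp only [Nat.sub_sub_self (Finset.mem_Icc.1 hi).2]
    exact (mem_reesAlgebra_iff I _).1 (Subtype.prop _) i
  · rw [← sum_term, Finset.sum_range_succ, term_top, add_comm, ← Finset.Ico_add_one_right_eq_Icc,
      Finset.sum_Ico_reflect term 1 le_rfl, Finset.range_eq_Ico, Nat.sub_self, Nat.add_sub_cancel]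

lemma coe_idealIntClosure (I : Ideal R) : (idealIntClosure I : Set R) = intClosure I :=
  subset_antisymm (fun _ => mem_intClosure_of_mem_idealIntClosure)
    fun _ => mem_idealIntClosure_of_mem_intClosure

lemma mem_idealIntClosure_of_pow_eq_prod {I : Ideal R} {ι : Type*} {s : Finset ι} {n : ι → ℕ}
    {f : R} {g : ι → R} (hg : ∀ i ∈ s, g i ∈ idealIntClosure I) (hn : ∑ i ∈ s, n i ≠ 0)
    (hfg : f ^ ∑ i ∈ s, n i = ∏ i ∈ s, g i ^ n i) : f ∈ idealIntClosure I := by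
  refine mem_idealIntClosure.2 (IsIntegral.of_pow (Nat.pos_of_ne_zero hn) ?_)
  have prod_monomial : ∏ i ∈ s, (monomial 1 (g i)) ^ n i =
      monomial (∑ i ∈ s, n i) (∏ i ∈ s, g i ^ n i) := by
    simp only [← C_mul_X_pow_eq_monomial, pow_one, mul_pow, Finset.prod_mul_distrib, map_prod,
      map_pow, Finset.prod_pow_eq_pow_sum]
  rw [monomial_pow, one_mul, hfg, ← prod_monomial]
  exact IsIntegral.prod _ fun i hi => (mem_idealIntClosure.1 (hg i hi)).pow _

end IntegralClosure

section MonomialOrder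

lemma exists_pow_succ_mem_mul_pow_of_mem_intClosure {I N J : Ideal R} {f : R} (hIN : I ≤ N)
    (hNJ : N ≤ J) (hfJ : f ∈ J) (hf : f ∈ intClosure I) : ∃ n, f ^ (n + 1) ∈ N * J ^ n := by
  obtain ⟨m, hm, a, ha, hfa⟩ := hf
  obtain ⟨n, rfl⟩ := Nat.exists_eq_add_one.2 hm
  refine ⟨n, ?_⟩
  rw [eq_neg_of_add_eq_zero_left hfa]
  refine neg_mem (sum_mem fun i hi => ?_)
  obtain ⟨hi₁, hin⟩ := Finset.mem_Icc.1 hi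
  obtain ⟨k, rfl⟩ := Nat.exists_eq_add_one.2 hi₁
  have hak : a (k + 1) ∈ N * J ^ k := by
    refine Ideal.mul_mono hIN (Ideal.pow_right_mono (hIN.trans hNJ) k) ?_
    rw [← pow_succ']
    exact ha _ hi
  have := Ideal.mul_mem_mul hak (Ideal.pow_mem_pow hfJ (n + 1 - (k + 1)))
  rwa [mul_assoc, ← pow_add, show k + (n + 1 - (k + 1)) = n by lia] at this

lemma pow_succ_sub_pow_succ_mem_mul_pow {N J : Ideal R} {f g : R} (hf : f ∈ J) (hg : g ∈ J)
    (hfg : f - g ∈ N) (n : ℕ) : f ^ (n + 1) - g ^ (n + 1) ∈ N * J ^ n := by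
  rw [← (Commute.all f g).mul_geom_sum₂]
  refine Ideal.mul_mem_mul hfg (sum_mem fun i hi => ?_)
  have := Ideal.mul_mem_mul (Ideal.pow_mem_pow hf i) (Ideal.pow_mem_pow hg (n + 1 - 1 - i))
  rwa [← pow_add, show i + (n + 1 - 1 - i) = n by have := Finset.mem_range.1 hi; lia] at this

lemma IsMonRep.exists_mul_mono_sub_mul_mem {x : Fin p → R} {Λ : Type*} [PartialOrder Λ]
    {κ : (Fin p → ℕ) → Λ} (hκ : Function.Injective κ) {f : R}
    {A : Finset (Fin p → ℕ)} (hA : IsMonRep x f A) {α : Fin p → ℕ} (hα : α ∈ A)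
    (hαA : ∀ b ∈ A, κ α ≤ κ b) :
    ∃ r ∉ span (range x), ∃ h, r * mono x α - h * f ∈ monIdeal x {b | κ α < κ b} := by
  obtain ⟨h, r, -, hr, hf⟩ := hA
  refine ⟨r α, hr α hα, h, ?_⟩
  rw [hf, ← Finset.add_sum_erase _ _ hα, sub_add_cancel_left]
  refine neg_mem (sum_mem fun b hb => Ideal.mul_mem_left _ _ (mono_mem_monIdeal ?_))
  obtain ⟨hbα, hbA⟩ := Finset.mem_erase.1 hb
  exact (hαA b hbA).lt_of_ne (hκ.ne hbα.symm)

variable {Λ : Type*} [AddCommMonoid Λ] [LinearOrder Λ] [IsOrderedCancelAddMonoid Λ]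

lemma monIdeal_lt_mul_monIdeal_le_pow_le (x : Fin p → R) (κ : (Fin p → ℕ) →+ Λ) (c : Λ) (n : ℕ) :
    monIdeal x {a | c < κ a} * monIdeal x {a | c ≤ κ a} ^ n ≤
      monIdeal x {a | (n + 1) • c < κ a} := by
  induction n with
  | zero => simp
  | succ n ih =>
    calc monIdeal x {a | c < κ a} * monIdeal x {a | c ≤ κ a} ^ (n + 1)
        = monIdeal x {a | c < κ a} * monIdeal x {a | c ≤ κ a} ^ n * monIdeal x {a | c ≤ κ a} := by
          rw [pow_succ, mul_assoc]
      _ ≤ monIdeal x {a | (n + 1) • c < κ a} * monIdeal x {a | c ≤ κ a} :=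
          Ideal.mul_mono_left ih
      _ = monIdeal x ({a | (n + 1) • c < κ a} + {a | c ≤ κ a}) := monIdeal_add.symm
      _ ≤ monIdeal x {a | (n + 1 + 1) • c < κ a} := monIdeal_mono <| by
          rintro _ ⟨a, ha, b, hb, rfl⟩
          rw [Set.mem_ofPred_eq, map_add, succ_nsmul]
          exact add_lt_add_of_lt_of_le ha hb

-- The `n`-th power of the leading term of `f` is the leading term of `f ^ n`, whereas an equation
-- of integral dependence over an ideal with larger exponents leaves no room for such a term.
lemma IsPrimeSystem.exists_exponents_le_of_mem_intClosure {x : Fin p → R} (hx : IsPrimeSystem x)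
    {κ : (Fin p → ℕ) →+ Λ} (hκ : Monotone κ) (hκ' : Function.Injective κ) {I : Ideal R} {f : R}
    (hf : f ∈ intClosure I) {a : Fin p → ℕ} (ha : a ∈ supp x f) :
    ∃ u ∈ exponents x I, κ u ≤ κ a := by
  by_contra! hIa
  obtain ⟨A, hfA, hA⟩ := hx.exists_isMinMonRep_supp f
  have haA : a ∈ A := by rwa [hA] at ha
  obtain ⟨α, hα, hαA⟩ := A.exists_min_image κ ⟨a, haA⟩
  obtain ⟨r, hr, h, leading⟩ := hfA.1.exists_mul_mono_sub_mul_mem hκ' hα hαA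
  have isUpperSet_lt (c : Λ) : IsUpperSet {b | c < κ b} := fun b d hbd hb => hb.trans_le (hκ hbd)
  have hI : I ≤ monIdeal x {b | κ α < κ b} :=
    (hx.le_monIdeal_iff (isUpperSet_lt _)).2 fun u hu => (hαA a haA).trans_lt (hIa u hu)
  have hfα : f ∈ monIdeal x {b | κ α ≤ κ b} :=
    (hx.mem_monIdeal_iff_supp_subset fun _ _ hbc hb => hb.trans (hκ hbc)).2 (by rwa [hA])
  obtain ⟨n, hn⟩ := exists_pow_succ_mem_mul_pow_of_mem_intClosure hI
    (monIdeal_mono fun _ => le_of_lt) hfα hf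
  have leading_pow : r ^ (n + 1) * mono x ((n + 1) • α) ∈
      monIdeal x {b | (n + 1) • κ α < κ b} := by
    refine monIdeal_lt_mul_monIdeal_le_pow_le x κ (κ α) n ?_
    have := add_mem (pow_succ_sub_pow_succ_mem_mul_pow
      (Ideal.mul_mem_left _ r (mono_mem_monIdeal (le_refl (κ α)))) (Ideal.mul_mem_left _ h hfα)
      leading n) (Ideal.mul_mem_left _ (h ^ (n + 1)) hn)
    rwa [← mul_pow, sub_add_cancel, mul_pow, ← mono_nsmul] at this
  have not_lt : (n + 1) • α ∉ {b | (n + 1) • κ α < κ b} := by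
    rw [Set.mem_ofPred_eq, map_nsmul]
    exact lt_irrefl _
  exact hr (hx.isPrime_span_range.mem_of_pow_mem _
    (hx.mem_span_range_of_mul_mono_mem (isUpperSet_lt _) not_lt leading_pow))

end MonomialOrder

section Convexity

lemma toR_add (a b : Fin p → ℕ) : toR (a + b) = toR a + toR b :=
  funext fun i => Nat.cast_add (a i) (b i)

lemma convexHull_range_toR : convexHull ℝ (range (toR : (Fin p → ℕ) → Fin p → ℝ)) = Ici 0 := by
  have convexHull_range_natCast : convexHull ℝ (range (Nat.cast : ℕ → ℝ)) = Ici 0 := by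
    refine subset_antisymm (convexHull_min ?_ (convex_Ici (0 : ℝ))) fun t ht => ?_
    · rintro _ ⟨n, rfl⟩
      exact mem_Ici.2 (Nat.cast_nonneg n)
    · obtain ⟨n, hn⟩ := exists_nat_ge t
      refine segment_subset_convexHull (mem_range_self 0) (mem_range_self n) ?_
      rw [Nat.cast_zero, segment_eq_Icc (Nat.cast_nonneg n)]
      exact ⟨ht, hn⟩
  have range_toR : range (toR : (Fin p → ℕ) → Fin p → ℝ) = univ.pi fun _ => range Nat.cast := by
    exact range_piMap fun _ => Nat.cast
  rw [range_toR, convexHull_pi, convexHull_range_natCast]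
  exact pi_univ_Ici 0

lemma convexHull_toR_image_eq_add_Ici {U : Set (Fin p → ℕ)} (hU : IsUpperSet U) :
    convexHull ℝ (toR '' U) = convexHull ℝ (toR '' {b | Minimal (· ∈ U) b}) + Ici 0 := by
  have eq_minimal_add_univ : U = {b | Minimal (· ∈ U) b} + univ := by
    refine subset_antisymm (fun a ha => ?_) ?_
    · obtain ⟨b, hba, hb⟩ := exists_minimal_le ha
      exact ⟨b, hb, a - b, mem_univ _, add_tsub_cancel_of_le hba⟩
    · rintro _ ⟨b, hb, c, -, rfl⟩
      exact hU le_self_add hb.1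
  calc convexHull ℝ (toR '' U)
      = convexHull ℝ (toR '' {b | Minimal (· ∈ U) b} + range toR) := by
        conv_lhs => rw [eq_minimal_add_univ]
        rw [← image_univ, ← image2_add, ← image2_add, image_image2_distrib toR_add]
    _ = convexHull ℝ (toR '' {b | Minimal (· ∈ U) b}) + Ici 0 := by
        rw [convexHull_add, convexHull_range_toR]

lemma isClosed_convexHull_toR_image {U : Set (Fin p → ℕ)} (hU : IsUpperSet U) :
    IsClosed (convexHull ℝ (toR '' U)) := by
  rw [convexHull_toR_image_eq_add_Ici hU]
  exact isClosed_Ici.add_left_of_isCompact (((finite_minimal U).image toR).isCompact_convexHull ℝ)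

lemma isUpperSet_convexHull_toR_image {U : Set (Fin p → ℕ)} (hU : IsUpperSet U) :
    IsUpperSet (convexHull ℝ (toR '' U)) := by
  rw [convexHull_toR_image_eq_add_Ici hU]
  exact (isUpperSet_Ici 0).add_left

lemma exists_monotone_forall_lt_of_isUpperSet {E : Type*} [TopologicalSpace E] [AddCommGroup E]
    [Module ℝ E] [PartialOrder E] [IsOrderedAddMonoid E] [PosSMulMono ℝ E]
    [IsTopologicalAddGroup E] [ContinuousSMul ℝ E] [LocallyConvexSpace ℝ E]
    {C : Set E} (hC : Convex ℝ C) (hC' : IsClosed C) (hC'' : IsUpperSet C) {a : E} (ha : a ∉ C) :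
    ∃ φ : E →L[ℝ] ℝ, Monotone φ ∧ ∀ c ∈ C, φ a < φ c := by
  obtain rfl | ⟨c, hc⟩ := C.eq_empty_or_nonempty
  · exact ⟨0, monotone_const, by simp⟩
  obtain ⟨φ, s, haφ, hφ⟩ := geometric_hahn_banach_point_closed hC hC' ha
  refine ⟨φ, fun b d hbd => ?_, fun c hc => haφ.trans (hφ c hc)⟩
  by_contra! hdb
  obtain ⟨n, hn⟩ := exists_nat_gt ((φ c - s) / (φ b - φ d))
  have hmem : c + (n : ℝ) • (d - b) ∈ C :=
    hC'' (le_add_of_nonneg_right (smul_nonneg n.cast_nonneg (sub_nonneg.2 hbd))) hc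
  have := hφ _ hmem
  rw [div_lt_iff₀ (sub_pos.2 hdb)] at hn
  simp only [map_add, map_smul, map_sub, smul_eq_mul] at this
  linarith

-- Dirichlet's argument: among the bounded integer vectors `N • d - ∑ ⌊N w i⌋ • c i` two coincide.
lemma exists_nat_sum_mul_eq {ι κ : Type*} [Fintype ι] [Finite κ] {w : ι → ℝ} (hw : 0 ≤ w)
    {c : ι → κ → ℤ} {d : κ → ℤ} (hwc : ∀ k, ∑ i, w i * c i k = d k) :
    ∃ q : ℕ, q ≠ 0 ∧ ∃ n : ι → ℕ, ∀ k, ∑ i, n i * c i k = q * d k := by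
  let err (N : ℕ) (k : κ) : ℤ := N * d k - ∑ i, ⌊N * w i⌋ * c i k
  have err_eq (N : ℕ) (k : κ) : (err N k : ℝ) = ∑ i, Int.fract (N * w i) * c i k := by
    simp only [err, Int.cast_sub, Int.cast_mul, Int.cast_natCast, Int.cast_sum, ← hwc, Int.fract,
      sub_mul, Finset.sum_sub_distrib, Finset.mul_sum, mul_assoc]
  let box : Set (κ → ℤ) := {e | ∀ k, e k ∈ Icc (-∑ i, |c i k|) (∑ i, |c i k|)}
  have err_mem_box (N : ℕ) : err N ∈ box := fun k => by
    rw [mem_Icc, ← abs_le, ← Int.cast_le (R := ℝ), Int.cast_abs, err_eq, Int.cast_sum]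
    refine (Finset.abs_sum_le_sum_abs _ _).trans (Finset.sum_le_sum fun i _ => ?_)
    rw [abs_mul, Int.cast_abs, Int.abs_fract]
    exact mul_le_of_le_one_left (abs_nonneg _) (Int.fract_lt_one _).le
  obtain ⟨N, M, hNM, herr⟩ := Set.Finite.exists_lt_map_eq_of_forall_mem err_mem_box
    (Set.Finite.pi' fun k => finite_Icc _ _)
  obtain ⟨n, hn⟩ : ∃ n : ι → ℕ, ∀ i, (n i : ℤ) = ⌊M * w i⌋ - ⌊N * w i⌋ := by
    refine ⟨fun i => (⌊M * w i⌋ - ⌊N * w i⌋).toNat, fun i => Int.toNat_of_nonneg ?_⟩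
    have := hw i
    exact sub_nonneg.2 (Int.floor_mono (by gcongr))
  refine ⟨M - N, Nat.sub_ne_zero_of_lt hNM, n, fun k => ?_⟩
  have := congrFun herr k
  simp only [err] at this
  simp only [hn, sub_mul, Finset.sum_sub_distrib, Nat.cast_sub hNM.le]
  linarith

lemma exists_sum_nsmul_eq_of_toR_mem_convexHull {U : Set (Fin p → ℕ)} {a : Fin p → ℕ}
    (ha : toR a ∈ convexHull ℝ (toR '' U)) :
    ∃ (ι : Type) (_ : Fintype ι) (n : ι → ℕ) (u : ι → Fin p → ℕ), (∀ i, u i ∈ U) ∧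
      ∑ i, n i ≠ 0 ∧ (∑ i, n i) • a = ∑ i, n i • u i := by
  obtain ⟨ι, _, w, z, hw, hw₁, hz, hwz⟩ := mem_convexHull_iff_exists_fintype.1 ha
  choose u hu huz using hz
  -- The column `none` encodes that the weights add up to `1`.
  obtain ⟨q, hq, n, hn⟩ := exists_nat_sum_mul_eq (κ := Option (Fin p)) (w := w) hw
    (c := fun i k => k.elim 1 fun j => u i j) (d := fun k => k.elim 1 fun j => a j) (by
      rintro (_ | j)
      · simpa using hw₁
      · simpa [toR, ← huz] using congrFun hwz j)
  have hnq : ∑ i, n i = q := by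
    have := hn none
    simp only [Option.elim_none, mul_one] at this
    exact_mod_cast this
  refine ⟨ι, _, n, u, hu, hnq.trans_ne hq, funext fun j => ?_⟩
  have := hn (some j)
  simp only [Option.elim_some] at this
  rw [hnq, Finset.sum_apply]
  exact_mod_cast this.symm

end Convexity

section NewtonPolyhedron

/-- The total order on exponent vectors given by an additive weight on `ℝ^p`, ties being broken
lexicographically. -/
def weightLex (φ : (Fin p → ℝ) →+ ℝ) : (Fin p → ℕ) →+ Lex (ℝ × Lex (Fin p → ℕ)) where
  toFun a := toLex (φ (toR a), toLex a)
  map_zero' := by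
    have toR_zero : toR (0 : Fin p → ℕ) = 0 := funext fun _ => Nat.cast_zero
    rw [toR_zero, map_zero]
    rfl
  map_add' a b := by
    rw [toR_add, map_add]
    rfl

lemma weightLex_monotone {φ : (Fin p → ℝ) →+ ℝ} (hφ : Monotone φ) : Monotone (weightLex φ) :=
  fun _ _ hab => Prod.Lex.toLex_mono
    ⟨hφ fun i => Nat.cast_le.2 (hab i), Pi.toLex_monotone hab⟩

lemma weightLex_injective (φ : (Fin p → ℝ) →+ ℝ) : Function.Injective (weightLex φ) :=
  fun _ _ hab => congrArg (fun z : Lex (ℝ × Lex (Fin p → ℕ)) => ofLex (ofLex z).2) hab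

lemma le_of_weightLex_le {φ : (Fin p → ℝ) →+ ℝ} {a b : Fin p → ℕ}
    (hab : weightLex φ a ≤ weightLex φ b) : φ (toR a) ≤ φ (toR b) :=
  Prod.Lex.monotone_fst _ _ hab

/-- The exponents of the monomials generating `I_0`. -/
def latticePoints (x : Fin p → R) (I : Ideal R) : Set (Fin p → ℕ) := {a | toR a ∈ ΓI x I}

lemma idealZero_eq_monIdeal (x : Fin p → R) (I : Ideal R) :
    idealZero x I = monIdeal x (latticePoints x I) := rfl

lemma ΓI_eq_convexHull (x : Fin p → R) (I : Ideal R) :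
    ΓI x I = convexHull ℝ (toR '' exponents x I) := rfl

lemma KIdeal_eq_monIdeal (x : Fin p → R) (I : Ideal R) :
    KIdeal x I = monIdeal x {a | mono x a ∈ idealIntClosure I} := by
  rw [KIdeal, monIdeal, ← coe_idealIntClosure]
  congr 1
  ext m
  constructor
  · rintro ⟨⟨a, rfl⟩, ha⟩
    exact ⟨a, ha, rfl⟩
  · rintro ⟨a, ha, rfl⟩
    exact ⟨⟨a, rfl⟩, ha⟩

lemma KIdeal_le_idealIntClosure (x : Fin p → R) (I : Ideal R) : KIdeal x I ≤ idealIntClosure I :=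
  span_le.2 fun _ hm => mem_idealIntClosure_of_mem_intClosure hm.2

lemma idealIntClosure_le_KIdeal {x : Fin p → R} {I : Ideal R} {A : Set (Fin p → ℕ)}
    (hA : idealIntClosure I = monIdeal x A) : idealIntClosure I ≤ KIdeal x I := by
  rw [KIdeal_eq_monIdeal]
  conv_lhs => rw [hA]
  exact monIdeal_mono fun a ha => hA.ge (mono_mem_monIdeal ha)

lemma isUpperSet_setOf_mono_mem (x : Fin p → R) (J : Ideal R) : IsUpperSet {a | mono x a ∈ J} := by
  intro a b hab ha
  obtain ⟨c, rfl⟩ := exists_add_of_le hab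
  rw [Set.mem_ofPred_eq, mono_add]
  exact J.mul_mem_right _ ha

lemma monIdeal_convexHull_le_idealIntClosure {x : Fin p → R} {I : Ideal R}
    {U : Set (Fin p → ℕ)} (hU : ∀ u ∈ U, mono x u ∈ idealIntClosure I) :
    monIdeal x {a | toR a ∈ convexHull ℝ (toR '' U)} ≤ idealIntClosure I := by
  refine span_le.2 ?_
  rintro _ ⟨a, ha, rfl⟩
  obtain ⟨ι, _, n, u, hu, hn, hna⟩ := exists_sum_nsmul_eq_of_toR_mem_convexHull ha
  refine mem_idealIntClosure_of_pow_eq_prod (fun i _ => hU _ (hu i)) hn ?_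
  rw [← mono_nsmul, hna, mono_sum_nsmul]

namespace IsPrimeSystem

variable {x : Fin p → R} (hx : IsPrimeSystem x) {I K : Ideal R}
include hx

lemma isUpperSet_latticePoints : IsUpperSet (latticePoints x I) := fun _ _ hab ha =>
  isUpperSet_convexHull_toR_image (hx.isUpperSet_exponents I) (fun i => Nat.cast_le.2 (hab i)) ha

lemma ΓI_subset_iff : ΓI x K ⊆ ΓI x I ↔ K ≤ idealZero x I := by
  have convex_ΓI : Convex ℝ (ΓI x I) := convex_convexHull ℝ _
  rw [idealZero_eq_monIdeal, hx.le_monIdeal_iff hx.isUpperSet_latticePoints, ΓI_eq_convexHull x K,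
    convex_ΓI.convexHull_subset_iff, image_subset_iff]
  rfl

lemma ΓE_subset_iff {f : R} : ΓE x f ⊆ ΓI x I ↔ f ∈ idealZero x I := by
  rw [ΓE, hx.ΓI_subset_iff, span_singleton_le_iff_mem]

-- A linear form separating `a` from the Newton polyhedron would bound the exponents of `I` away
-- from the exponent `a` of an element integral over `I`.
lemma supp_subset_latticePoints {f : R} (hf : f ∈ intClosure I) :
    supp x f ⊆ latticePoints x I := by
  intro a ha
  by_contra haΓ
  have hU := hx.isUpperSet_exponents I
  obtain ⟨φ, hφ, hφa⟩ := exists_monotone_forall_lt_of_isUpperSet (convex_convexHull ℝ _)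
    (isClosed_convexHull_toR_image hU) (isUpperSet_convexHull_toR_image hU) haΓ
  obtain ⟨u, hu, hua⟩ := hx.exists_exponents_le_of_mem_intClosure
    (weightLex_monotone (φ := (φ : (Fin p → ℝ) →+ ℝ)) hφ) (weightLex_injective _) hf ha
  exact (hφa _ (subset_convexHull ℝ _ (mem_image_of_mem toR hu))).not_ge (le_of_weightLex_le hua)

lemma idealIntClosure_le_idealZero : idealIntClosure I ≤ idealZero x I := fun _ hf =>
  (hx.mem_monIdeal_iff_supp_subset hx.isUpperSet_latticePoints).2
    (hx.supp_subset_latticePoints (mem_intClosure_of_mem_idealIntClosure hf))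

lemma ΓI_KIdeal_eq_of_idealIntClosure_le (h : idealIntClosure I ≤ KIdeal x I) :
    ΓI x I = ΓI x (KIdeal x I) := by
  refine subset_antisymm (hx.ΓI_subset_iff.2 ?_) (hx.ΓI_subset_iff.2 ?_)
  · exact ((le_idealIntClosure I).trans h).trans (hx.ΓI_subset_iff.1 subset_rfl)
  · exact (KIdeal_le_idealIntClosure x I).trans hx.idealIntClosure_le_idealZero

lemma idealZero_le_idealIntClosure_of_ΓI_eq (h : ΓI x I = ΓI x (KIdeal x I)) :
    idealZero x I ≤ idealIntClosure I := by
  rw [idealZero, h, ΓI_eq_convexHull]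
  exact monIdeal_convexHull_le_idealIntClosure
    ((hx.le_monIdeal_iff (isUpperSet_setOf_mono_mem x _)).1 (KIdeal_eq_monIdeal x I).le)

end IsPrimeSystem

end NewtonPolyhedron

theorem monomial_intClosure_tfae_general {x : Fin p → R} (hx : IsPrimeSystem x) (I : Ideal R) :
    [ (∃ A : Set (Fin p → ℕ), intClosure I = ↑(Ideal.span (mono x '' A))),
      (↑(idealZero x I) ⊆ intClosure I),
      (intClosure I = {f : R | ΓE x f ⊆ ΓI x I}),
      (ΓI x I = ΓI x (KIdeal x I)) ].TFAE := by
  simp only [hx.ΓE_subset_iff, ← coe_idealIntClosure, SetLike.coe_subset_coe,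
    SetLike.setOfPred_mem_eq, SetLike.coe_set_eq]
  tfae_have 2 → 3 := hx.idealIntClosure_le_idealZero.antisymm
  tfae_have 3 → 1 := fun h => ⟨latticePoints x I, h⟩
  tfae_have 1 → 4 := fun ⟨_, hA⟩ =>
    hx.ΓI_KIdeal_eq_of_idealIntClosure_le (idealIntClosure_le_KIdeal hA)
  tfae_have 4 → 2 := hx.idealZero_le_idealIntClosure_of_ΓI_eq
  tfae_finish

/-- characterizations of ideals with monomial integral closure. -/
theorem monomial_intClosure_tfae {R : Type*} [CommRing R] {p : ℕ}
    (x : Fin p → R) (hR : IsRegularDomain R) (hx : IsGRSOP x) (I : Ideal R) :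
    [ (∃ A : Set (Fin p → ℕ), intClosure I = ↑(Ideal.span (mono x '' A))),
      (↑(idealZero x I) ⊆ intClosure I),
      (intClosure I = {f : R | ΓE x f ⊆ ΓI x I}),
      (ΓI x I = ΓI x (KIdeal x I)) ].TFAE :=
  monomial_intClosure_tfae_general (hx.isPrimeSystem hR) I

end NND
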